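/- Let ν be a real number with ν ≥ 1. For every integer k ≥ 1 one has λ⁻_{ν−1,k} < λ⁺_{ν−1,k} < λ⁻_{ν−1,k+1}; in other words, between two consecutive positive zeroes of z ↦ J_{ν−1}(z) − J_ν(z) there is exactly one positive zero of z ↦ J_{ν−1}(z) + J_ν(z), and vice versa. -/

import Mathlib

/-- Bessel function of the first kind of real order `ν`, defined via its power series
`J_ν(z) = ∑ₘ (−1)^m / (m! Γ(ν+m+1)) (z/2)^(ν+2m)` (with real-exponent powers). -/
noncomputable def besselJ (ν z : ℝ) : ℝ :=
  ∑' m : ℕ, ((-1 : ℝ) ^ m / (Nat.factorial m * Real.Gamma (ν + m + 1))) *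
    (z / 2) ^ (ν + 2 * (m : ℝ))

/-- `x` (indexed by `k ≥ 1`) enumerates the positive zeroes of `f`: it is strictly
increasing on indices `k ≥ 1`, each `x k` is a positive zero of `f`, and every positive
zero of `f` is some `x k`. -/
def EnumPosZeros (f : ℝ → ℝ) (x : ℕ → ℝ) : Prop :=
  StrictMonoOn x (Set.Ici 1) ∧ (∀ k, 1 ≤ k → 0 < x k ∧ f (x k) = 0) ∧
    ∀ z : ℝ, 0 < z → f z = 0 → ∃ k, 1 ≤ k ∧ x k = z

noncomputable def bcoef (μ : ℝ) (m : ℕ) : ℝ :=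
  (-1 : ℝ) ^ m / (Nat.factorial m * Real.Gamma (μ + m + 1))

noncomputable def bE (μ w : ℝ) : ℝ := ∑' m : ℕ, bcoef μ m * w ^ m

theorem gamma_lower (μ : ℝ) (hμ : 0 ≤ μ) (m : ℕ) :
    Real.Gamma (μ + 1) ≤ Real.Gamma (μ + m + 1) := by
  induction m with
  | zero => simp
  | succ m ih =>
    have h : Real.Gamma (μ + (m + 1 : ℕ) + 1) = (μ + m + 1) * Real.Gamma (μ + m + 1) := by
      rw [← Real.Gamma_add_one (by positivity)]
      push_cast
      congr 1
      ring
    rw [h]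
    have hp : 0 < Real.Gamma (μ + m + 1) := Real.Gamma_pos_of_pos (by positivity)
    have : (0 : ℝ) ≤ m := by positivity
    nlinarith

theorem bcoef_bound (μ : ℝ) (hμ : 0 ≤ μ) (m : ℕ) :
    |bcoef μ m| ≤ (1 / Real.Gamma (μ + 1)) / (Nat.factorial m) := by
  have hp : 0 < Real.Gamma (μ + 1) := Real.Gamma_pos_of_pos (by positivity)
  have h := gamma_lower μ hμ m
  have hf : (0 : ℝ) < Nat.factorial m := by positivity
  have hp2 : 0 < Real.Gamma (μ + m + 1) := lt_of_lt_of_le hp h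
  rw [bcoef, abs_div, abs_pow, abs_neg, abs_one, one_pow, abs_of_pos (by positivity), div_div]
  apply one_div_le_one_div_of_le (by positivity)
  rw [mul_comm]
  gcongr

theorem bcoef_succ (μ : ℝ) (m : ℕ) : bcoef μ (m + 1) * ((m : ℝ) + 1) = - bcoef (μ + 1) m := by
  unfold bcoef
  have : μ + ((m + 1 : ℕ) : ℝ) + 1 = μ + 1 + m + 1 := by push_cast; ring
  rw [this, Nat.factorial_succ]
  push_cast
  have : (m : ℝ) + 1 ≠ 0 := by positivity
  have : (Nat.factorial m : ℝ) ≠ 0 := by positivity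
  by_cases hG : Real.Gamma (μ + 1 + m + 1) = 0
  · simp [hG]
  · field_simp
    ring

theorem bsummable (μ : ℝ) (hμ : 0 ≤ μ) (w : ℝ) : Summable fun m => bcoef μ m * w ^ m := by
  apply Summable.of_norm_bounded
    (((Real.summable_pow_div_factorial |w|).mul_left (1 / Real.Gamma (μ + 1))))
  intro m
  rw [Real.norm_eq_abs, abs_mul, abs_pow]
  calc _ ≤ (1 / Real.Gamma (μ + 1)) / (Nat.factorial m) * |w| ^ m := by
        gcongr; exact bcoef_bound μ hμ m
    _ = _ := by ring

theorem bE_deriv (μ : ℝ) (hμ : 0 ≤ μ) (w : ℝ) : HasDerivAt (bE μ) (- bE (μ + 1) w) w := by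
  have hpos : 0 < Real.Gamma (μ + 1) := Real.Gamma_pos_of_pos (by positivity)
  set R := |w| + 1 with hR
  have hRp : 0 ≤ R := by positivity
  set u : ℕ → ℝ := fun m => (1 / Real.Gamma (μ + 1)) / (Nat.factorial m) * (m * R ^ (m - 1)) with hu
  have hus : Summable u := by
    rw [← summable_nat_add_iff 1]
    refine ((Real.summable_pow_div_factorial R).mul_left (1 / Real.Gamma (μ + 1))).congr ?_
    intro m
    simp only [hu, Nat.factorial_succ, Nat.add_sub_cancel]
    push_cast
    have : (m : ℝ) + 1 ≠ 0 := by positivity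
    field_simp
  have hw : w ∈ Metric.ball (0 : ℝ) R := by simp [hR]
  have key := hasDerivAt_tsum_of_isPreconnected (t := Metric.ball (0 : ℝ) R)
    (g := fun m w => bcoef μ m * w ^ m) (g' := fun m w => bcoef μ m * (m * w ^ (m - 1)))
    hus Metric.isOpen_ball (convex_ball _ _).isPreconnected
    (fun m y _ => (hasDerivAt_pow m y).const_mul _)
    (by
      intro m y hy
      rw [Real.norm_eq_abs, abs_mul, abs_mul, abs_pow, Nat.abs_cast]
      have hy' : |y| ≤ R := by
        have := hy; simp at this; exact this.le
      simp only [hu]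
      gcongr
      exact bcoef_bound μ hμ m)
    hw (bsummable μ hμ w) hw
  have e : ∑' m : ℕ, bcoef μ m * (m * w ^ (m - 1)) = - bE (μ + 1) w := by
    rw [tsum_eq_zero_add']
    · simp only [bE, ← tsum_neg]
      simp
      congr 1
      ext m
      rw [← mul_assoc, bcoef_succ]; ring
    · refine ((bsummable (μ + 1) (by linarith) w).neg).congr ?_
      intro m
      push_cast
      rw [← mul_assoc, bcoef_succ]; simp
  rw [← e]
  exact key

theorem bE_rec (ν : ℝ) (hν : 1 ≤ ν) (w : ℝ) :
    bE (ν - 1) w = ν * bE ν w - w * bE (ν + 1) w := by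
  have s0 := bsummable (ν - 1) (by linarith) w
  have s1 := bsummable ν (by linarith) w
  have s2 := bsummable (ν + 1) (by linarith) w
  have hc : ∀ m : ℕ, bcoef (ν - 1) m = (ν + m) * bcoef ν m := by
    intro m
    unfold bcoef
    have h0 : ν + m ≠ 0 := by positivity
    rw [Real.Gamma_add_one h0, show ν - 1 + m + 1 = ν + m by ring]
    have : Real.Gamma (ν + m) ≠ 0 := (Real.Gamma_pos_of_pos (by positivity)).ne'
    have : (Nat.factorial m : ℝ) ≠ 0 := by positivity
    field_simp
  have e : w * bE (ν + 1) w = - ∑' m : ℕ, bcoef ν m * m * w ^ m := by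
    rw [tsum_eq_zero_add']
    · simp only [bE, ← tsum_mul_left]
      simp
      rw [← tsum_neg]
      congr 1
      ext m
      rw [bcoef_succ]; ring
    · refine ((s2.mul_left w).neg).congr ?_
      intro m
      push_cast
      rw [bcoef_succ]; ring
  have s3 : Summable fun m : ℕ => bcoef ν m * m * w ^ m := by
    refine (s0.sub (s1.mul_left ν)).congr ?_
    intro m
    rw [hc]; ring
  rw [e, sub_neg_eq_add, bE, bE, ← tsum_mul_left, ← (s1.mul_left ν).tsum_add s3]
  congr 1
  ext m
  rw [hc]; ring

theorem bJ_eq (μ : ℝ) (hμ : 0 ≤ μ) (z : ℝ) (hz : 0 ≤ z) :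
    besselJ μ z = (z / 2) ^ μ * bE μ ((z / 2) ^ 2) := by
  unfold besselJ bE
  rw [← tsum_mul_left]
  congr 1
  ext m
  rw [Real.rpow_add_of_nonneg (by positivity) hμ (by positivity), Real.rpow_mul (by positivity),
    Real.rpow_natCast]
  norm_num [bcoef]
  ring

theorem bJ_cont (μ : ℝ) (hμ : 0 ≤ μ) : ContinuousOn (besselJ μ) (Set.Ici 0) := by
  have h : Continuous fun z : ℝ => (z / 2) ^ μ * bE μ ((z / 2) ^ 2) := by
    have h1 : Continuous (bE μ) :=
      continuous_iff_continuousAt.2 fun w => (bE_deriv μ hμ w).continuousAt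
    have h2 : Continuous fun z : ℝ => (z / 2) ^ μ :=
      (continuous_id.div_const 2).rpow_const (fun _ => Or.inr hμ)
    exact h2.mul (h1.comp (by fun_prop))
  exact h.continuousOn.congr fun z hz => bJ_eq μ hμ z hz

theorem bJ_deriv_aux (μ : ℝ) (hμ : 0 ≤ μ) (z : ℝ) (hz : 0 < z) :
    HasDerivAt (besselJ μ) (μ / z * besselJ μ z
      - (z / 2) ^ μ * (z / 2) * bE (μ + 1) ((z / 2) ^ 2)) z := by
  have h2 : HasDerivAt (fun z : ℝ => z / 2) (1 / 2) z := (hasDerivAt_id z).div_const 2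
  have h3 := h2.rpow_const (p := μ) (Or.inl (by positivity))
  have h4 := (bE_deriv μ hμ ((z / 2) ^ 2)).comp z (h2.pow 2)
  have h5 := h3.mul h4
  have hE : besselJ μ =ᶠ[nhds z] fun z : ℝ => (z / 2) ^ μ * bE μ ((z / 2) ^ 2) := by
    filter_upwards [lt_mem_nhds hz] with y hy using bJ_eq μ hμ y hy.le
  refine (HasDerivAt.congr_of_eventuallyEq h5 hE).congr_deriv ?_
  rw [bJ_eq μ hμ z hz.le, Real.rpow_sub_one (by positivity)]
  simp
  field_simp
  ring

theorem bJ_deriv_a (ν : ℝ) (hν : 1 ≤ ν) (z : ℝ) (hz : 0 < z) :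
    HasDerivAt (besselJ (ν - 1)) ((ν - 1) / z * besselJ (ν - 1) z - besselJ ν z) z := by
  refine (bJ_deriv_aux (ν - 1) (by linarith) z hz).congr_deriv ?_
  rw [bJ_eq ν (by linarith) z hz.le, Real.rpow_sub_one (by positivity)]
  simp
  field_simp
  simp

theorem bJ_deriv_b (ν : ℝ) (hν : 1 ≤ ν) (z : ℝ) (hz : 0 < z) :
    HasDerivAt (besselJ ν) (besselJ (ν - 1) z - ν / z * besselJ ν z) z := by
  refine (bJ_deriv_aux ν (by linarith) z hz).congr_deriv ?_
  rw [bJ_eq ν (by linarith) z hz.le, bJ_eq (ν - 1) (by linarith) z hz.le,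
    Real.rpow_sub_one (by positivity), bE_rec ν hν]
  field_simp
  ring

theorem F_deriv (ν : ℝ) (hν : 1 ≤ ν) (z : ℝ) (hz : 0 < z) :
    HasDerivAt (fun z => √z * (besselJ (ν - 1) z - besselJ ν z))
      (√z * ((ν - 1 / 2) / z - 1) * (besselJ (ν - 1) z + besselJ ν z)) z := by
  refine ((Real.hasDerivAt_sqrt hz.ne').mul
    ((bJ_deriv_a ν hν z hz).sub (bJ_deriv_b ν hν z hz))).congr_deriv ?_
  have hs : 0 < √z := Real.sqrt_pos.2 hz
  obtain ⟨s, hs', rfl⟩ : ∃ s, s = √z ∧ z = s ^ 2 := ⟨√z, rfl, (Real.sq_sqrt hz.le).symm⟩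
  rw [← hs'] at hs ⊢
  simp only [Pi.sub_apply]
  field_simp
  ring

theorem G_deriv (ν : ℝ) (hν : 1 ≤ ν) (z : ℝ) (hz : 0 < z) :
    HasDerivAt (fun z => √z * (besselJ (ν - 1) z + besselJ ν z))
      (√z * ((ν - 1 / 2) / z + 1) * (besselJ (ν - 1) z - besselJ ν z)) z := by
  refine ((Real.hasDerivAt_sqrt hz.ne').mul
    ((bJ_deriv_a ν hν z hz).add (bJ_deriv_b ν hν z hz))).congr_deriv ?_
  have hs : 0 < √z := Real.sqrt_pos.2 hz
  obtain ⟨s, hs', rfl⟩ : ∃ s, s = √z ∧ z = s ^ 2 := ⟨√z, rfl, (Real.sq_sqrt hz.le).symm⟩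
  rw [← hs'] at hs ⊢
  simp only [Pi.add_apply]
  field_simp
  ring

theorem rolle_G (ν : ℝ) (hν : 1 ≤ ν) (x y : ℝ) (hx : 0 ≤ x) (hxy : x < y)
    (h1 : x = 0 ∨ besselJ (ν - 1) x + besselJ ν x = 0)
    (h2 : besselJ (ν - 1) y + besselJ ν y = 0) :
    ∃ t, x < t ∧ t < y ∧ besselJ (ν - 1) t - besselJ ν t = 0 := by
  have hc : ContinuousOn (fun z => √z * (besselJ (ν - 1) z + besselJ ν z)) (Set.Icc x y) :=
    (Real.continuous_sqrt.continuousOn.mul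
      ((bJ_cont (ν - 1) (by linarith)).add (bJ_cont ν (by linarith)))).mono
      (fun z hz => le_trans hx hz.1)
  obtain ⟨t, ht, h⟩ := exists_hasDerivAt_eq_zero hxy hc
    (by rcases h1 with h1 | h1 <;> simp [h1, h2])
    (fun z hz => G_deriv ν hν z (lt_of_le_of_lt hx hz.1))
  have ht0 : 0 < t := lt_of_le_of_lt hx ht.1
  refine ⟨t, ht.1, ht.2, ?_⟩
  have hs : 0 < √t := Real.sqrt_pos.2 ht0
  have : 0 < (ν - 1 / 2) / t := div_pos (by linarith) ht0
  exact (mul_eq_zero.1 h).resolve_left (by positivity)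

theorem rolle_F (ν : ℝ) (hν : 1 ≤ ν) (x y : ℝ) (hx : 0 ≤ x) (hxy : x < y)
    (hc : y ≤ ν - 1 / 2 ∨ ν - 1 / 2 ≤ x)
    (h1 : x = 0 ∨ besselJ (ν - 1) x - besselJ ν x = 0)
    (h2 : besselJ (ν - 1) y - besselJ ν y = 0) :
    ∃ t, x < t ∧ t < y ∧ besselJ (ν - 1) t + besselJ ν t = 0 := by
  have hcont : ContinuousOn (fun z => √z * (besselJ (ν - 1) z - besselJ ν z)) (Set.Icc x y) :=
    (Real.continuous_sqrt.continuousOn.mul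
      ((bJ_cont (ν - 1) (by linarith)).sub (bJ_cont ν (by linarith)))).mono
      (fun z hz => le_trans hx hz.1)
  obtain ⟨t, ht, h⟩ := exists_hasDerivAt_eq_zero hxy hcont
    (by rcases h1 with h1 | h1 <;> simp [h1, h2])
    (fun z hz => F_deriv ν hν z (lt_of_le_of_lt hx hz.1))
  have ht0 : 0 < t := lt_of_le_of_lt hx ht.1
  refine ⟨t, ht.1, ht.2, ?_⟩
  have hs : 0 < √t := Real.sqrt_pos.2 ht0
  refine (mul_eq_zero.1 h).resolve_left (mul_ne_zero hs.ne' ?_)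
  intro h0
  have h0 : ν - 1 / 2 = t := by
    field_simp at h0
    linarith
  rcases hc with hc | hc
  · linarith [ht.2]
  · linarith [ht.1]

theorem stmt17 (ν : ℝ) (hν : 1 ≤ ν) (k : ℕ) (hk : 1 ≤ k)
    (lam lamp : ℕ → ℝ)
    (hlam : EnumPosZeros (fun z => besselJ (ν - 1) z - besselJ ν z) lam)
    (hlamp : EnumPosZeros (fun z => besselJ (ν - 1) z + besselJ ν z) lamp) :
    lam k < lamp k ∧ lamp k < lam (k + 1) := by
  obtain ⟨m1, z1, s1⟩ := hlam
  obtain ⟨m2, z2, s2⟩ := hlamp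
  have least : ∀ t, 0 < t → besselJ (ν - 1) t - besselJ ν t = 0 → lam 1 ≤ t := by
    intro t ht h
    obtain ⟨j, hj, rfl⟩ := s1 t ht h
    exact m1.monotoneOn (Set.mem_Ici.2 le_rfl) hj hj
  have first : ν - 1 / 2 < lam 1 := by
    by_contra! hle
    obtain ⟨t, ht0, ht1, ht⟩ := rolle_F ν hν 0 (lam 1) le_rfl (z1 1 le_rfl).1 (Or.inl hle)
      (Or.inl rfl) (z1 1 le_rfl).2
    obtain ⟨s, hs0, hs1, hs⟩ := rolle_G ν hν 0 t le_rfl ht0 (Or.inl rfl) ht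
    linarith [least s hs0 hs]
  have betw : ∀ n, 1 ≤ n → ∃ j, 1 ≤ j ∧ lam n < lamp j ∧ lamp j < lam (n + 1) := by
    intro n hn
    have hn0 := (z1 n hn).1
    obtain ⟨t, ht0, ht1, ht⟩ := rolle_F ν hν (lam n) (lam (n + 1)) hn0.le
      (m1 (Set.mem_Ici.2 hn) (Set.mem_Ici.2 (by omega)) (by omega))
      (Or.inr (by linarith [least _ hn0 (z1 n hn).2]))
      (Or.inr (z1 n hn).2) (z1 (n + 1) (by omega)).2
    obtain ⟨j, hj, rfl⟩ := s2 t (hn0.trans ht0) ht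
    exact ⟨j, hj, ht0, ht1⟩
  have betw2 : ∀ n, 1 ≤ n → ∃ j, 1 ≤ j ∧ lamp n < lam j ∧ lam j < lamp (n + 1) := by
    intro n hn
    have hn0 := (z2 n hn).1
    obtain ⟨t, ht0, ht1, ht⟩ := rolle_G ν hν (lamp n) (lamp (n + 1)) hn0.le
      (m2 (Set.mem_Ici.2 hn) (Set.mem_Ici.2 (by omega)) (by omega))
      (Or.inr (z2 n hn).2) (z2 (n + 1) (by omega)).2
    obtain ⟨j, hj, rfl⟩ := s1 t (hn0.trans ht0) ht
    exact ⟨j, hj, ht0, ht1⟩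
  constructor
  · induction k, hk using Nat.le_induction with
    | base =>
      obtain ⟨s, hs0, hs1, hs⟩ := rolle_G ν hν 0 (lamp 1) le_rfl (z2 1 le_rfl).1 (Or.inl rfl)
        (z2 1 le_rfl).2
      exact lt_of_le_of_lt (least s hs0 hs) hs1
    | succ n hn ih =>
      obtain ⟨j, hj, h1, h2⟩ := betw2 n hn
      have : n < j := (m1.lt_iff_lt hn hj).1 (ih.trans h1)
      exact lt_of_le_of_lt (m1.monotoneOn (Set.mem_Ici.2 (by omega)) hj this) h2
  · induction k, hk using Nat.le_induction with
    | base =>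
      obtain ⟨j, hj, h1, h2⟩ := betw 1 le_rfl
      exact lt_of_le_of_lt (m2.monotoneOn (Set.mem_Ici.2 le_rfl) hj hj) h2
    | succ n hn ih =>
      obtain ⟨j, hj, h1, h2⟩ := betw (n + 1) (by omega)
      have : n < j := (m2.lt_iff_lt hn hj).1 (ih.trans h1)
      exact lt_of_le_of_lt (m2.monotoneOn (Set.mem_Ici.2 (by omega)) hj this) h2
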